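/- Suppose every Hochschild 3-cocycle of A is a Hochschild 3-coboundary (i.e. H³(A,A) = 0). Then every Hochschild 2-cocycle α is the infinitesimal of an associative formal deformation: there exists a sequence of K-bilinear maps α_r : A × A → A (r ≥ 1) with α₁ = α and α₀(a,b) = a·b such that D_k = 0 for all k ≥ 1. -/

import Mathlib

/-!
The associator of the deformed product `a * b = ∑ hʳ αᵣ(a, b)` satisfies the pentagon identity that
holds in every nonassociative ring. If its coefficients vanish below `hⁿ`, the coefficient of `hⁿ`
in that identity says that the `n`-th coefficient of the associator, the obstruction, is a
Hochschild 3-cocycle. When it is the coboundary of some `β`, adding `β` to `αₙ` kills it without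
disturbing the lower coefficients, so the deformation can be corrected one order at a time.
-/

open Finset

section TripleAntidiagonal

variable {ι N : Type*} [AddCommMonoid ι] [HasAntidiagonal ι] [AddCommMonoid N]

theorem sum_antidiagonal_antidiagonal_swap (n : ι) (f : ι → ι → ι → N) :
    ∑ p ∈ antidiagonal n, ∑ q ∈ antidiagonal p.2, f p.1 q.1 q.2 =
      ∑ p ∈ antidiagonal n, ∑ q ∈ antidiagonal p.2, f q.1 p.1 q.2 := by
  simp only [sum_sigma']
  apply sum_nbij' (fun ⟨⟨i, _⟩, ⟨s, r⟩⟩ ↦ ⟨(s, i + r), (i, r)⟩)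
    (fun ⟨⟨i, _⟩, ⟨s, r⟩⟩ ↦ ⟨(s, i + r), (i, r)⟩)
  case hi | hj =>
    rintro ⟨⟨i, _⟩, ⟨s, r⟩⟩ h
    simp only [mem_sigma, HasAntidiagonal.mem_antidiagonal] at h ⊢
    exact ⟨by rw [← h.1, ← h.2, add_left_comm], trivial⟩
  all_goals simp +contextual

theorem sum_antidiagonal_antidiagonal_rotate (n : ι) (f : ι → ι → ι → N) :
    ∑ p ∈ antidiagonal n, ∑ q ∈ antidiagonal p.2, f p.1 q.1 q.2 =
      ∑ p ∈ antidiagonal n, ∑ q ∈ antidiagonal p.2, f q.1 q.2 p.1 := by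
  simp only [sum_sigma']
  apply sum_nbij' (fun ⟨⟨i, _⟩, ⟨s, r⟩⟩ ↦ ⟨(r, i + s), (i, s)⟩)
    (fun ⟨⟨i, _⟩, ⟨s, r⟩⟩ ↦ ⟨(s, r + i), (r, i)⟩)
  case hi | hj =>
    rintro ⟨⟨i, _⟩, ⟨s, r⟩⟩ h
    simp only [mem_sigma, HasAntidiagonal.mem_antidiagonal] at h ⊢
    exact ⟨by rw [← h.1, ← h.2]; abel, trivial⟩
  all_goals simp +contextual

end TripleAntidiagonal

theorem exists_seq_extending_of_exists_update {X : Type*} {P : ℕ → (ℕ → X) → Prop}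
    (hcongr : ∀ n f g, (∀ m ≤ n, f m = g m) → P n f → P n g) {N : ℕ} {f : ℕ → X}
    (hinit : ∀ n < N, P n f)
    (hextend : ∀ n g, N ≤ n → (∀ m < N, g m = f m) → (∀ m < n, P m g) →
      ∃ x, P n (Function.update g n x)) :
    ∃ g : ℕ → X, (∀ n < N, g n = f n) ∧ ∀ n, P n g := by
  have : Nonempty X := ⟨f 0⟩
  choose! next hnext using hextend
  obtain ⟨g, hg⟩ : ∃ g : ℕ → X, ∀ n,
      g n = if n < N then f n else next n (fun m ↦ if m < n then g m else f m) :=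
    ⟨_, fun n ↦ WellFounded.fix_eq (C := fun _ ↦ X) Nat.lt_wfRel.wf
      (fun n prev ↦ if n < N then f n else next n (fun m ↦ if h : m < n then prev m h else f m)) n⟩
  have g_eq_f : ∀ n < N, g n = f n := fun n hn ↦ by rw [hg, if_pos hn]
  refine ⟨g, g_eq_f, fun n ↦ ?_⟩
  induction n using Nat.strong_induction_on with
  | _ n ih =>
    rcases lt_or_ge n N with hn | hn
    · exact hcongr n f g (fun m hm ↦ (g_eq_f m (hm.trans_lt hn)).symm) (hinit n hn)
    · set g' : ℕ → X := fun m ↦ if m < n then g m else f m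
      have g'_eq : ∀ m < n, g' m = g m := fun m hm ↦ if_pos hm
      have hPn := hnext n g' hn (fun m hm ↦ (g'_eq m (hm.trans_le hn)).trans (g_eq_f m hm))
        fun m hm ↦ hcongr m g g' (fun j hj ↦ (g'_eq j (hj.trans_lt hm)).symm) (ih m hm)
      refine hcongr n _ g (fun m hm ↦ ?_) hPn
      rcases hm.lt_or_eq with hm | rfl
      · rw [Function.update_of_ne hm.ne, g'_eq m hm]
      · rw [Function.update_self, hg m, if_neg hn.not_gt]

namespace FormalDeformation

-- With the default depth, lemmas on additive groups fail to apply to trilinear maps.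
set_option maxSynthPendingDepth 3

variable {K M : Type*} [CommSemiring K] [AddCommGroup M] [Module K M]

/-- The polarized associator `ν(μ(a, b), c) - ν(a, μ(b, c))` of two bilinear operations, with the
inner operation as the first argument; for `μ = ν` it is the usual associator. -/
def mixedAssociator (μ ν : M →ₗ[K] M →ₗ[K] M) : M →ₗ[K] M →ₗ[K] M →ₗ[K] M :=
  μ.compr₂ ν - LinearMap.lcomp K (M →ₗ[K] M) μ ∘ₗ LinearMap.llcomp K M M M ∘ₗ ν

@[simp]
theorem mixedAssociator_apply (μ ν : M →ₗ[K] M →ₗ[K] M) (a b c : M) :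
    mixedAssociator μ ν a b c = ν (μ a b) c - ν a (μ b c) :=
  rfl

theorem mixedAssociator_add_left (μ μ' ν : M →ₗ[K] M →ₗ[K] M) :
    mixedAssociator (μ + μ') ν = mixedAssociator μ ν + mixedAssociator μ' ν := by
  ext a b c
  simp only [mixedAssociator_apply, LinearMap.add_apply, map_add]
  abel

theorem mixedAssociator_add_right (μ ν ν' : M →ₗ[K] M →ₗ[K] M) :
    mixedAssociator μ (ν + ν') = mixedAssociator μ ν + mixedAssociator μ ν' := by
  ext a b c
  simp only [mixedAssociator_apply, LinearMap.add_apply]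
  abel

/-- The Hochschild differential of the 2-cochain `β` with respect to the product `μ`, written as
the linearization at `μ` of the associator, up to sign. -/
def differentialTwo (μ β : M →ₗ[K] M →ₗ[K] M) : M →ₗ[K] M →ₗ[K] M →ₗ[K] M :=
  -(mixedAssociator μ β + mixedAssociator β μ)

theorem differentialTwo_apply (μ β : M →ₗ[K] M →ₗ[K] M) (a b c : M) :
    differentialTwo μ β a b c = μ a (β b c) - β (μ a b) c + β a (μ b c) - μ (β a b) c := by
  simp only [differentialTwo, LinearMap.neg_apply, LinearMap.add_apply, mixedAssociator_apply]
  abel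

/-- The Hochschild differential of the 3-cochain `γ` with respect to the product `μ`, as a plain
function of four arguments. -/
def differentialThree (μ : M →ₗ[K] M →ₗ[K] M) (γ : M →ₗ[K] M →ₗ[K] M →ₗ[K] M) (a b c d : M) : M :=
  μ a (γ b c d) - γ (μ a b) c d + γ a (μ b c) d - γ a b (μ c d) + μ (γ a b c) d

@[simp]
theorem differentialThree_zero (μ : M →ₗ[K] M →ₗ[K] M) (a b c d : M) :
    differentialThree μ 0 a b c d = 0 := by
  simp [differentialThree]

theorem differentialThree_sum {ι : Type*} (s : Finset ι) (μ : M →ₗ[K] M →ₗ[K] M)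
    (γ : ι → M →ₗ[K] M →ₗ[K] M →ₗ[K] M) (a b c d : M) :
    differentialThree μ (∑ i ∈ s, γ i) a b c d = ∑ i ∈ s, differentialThree μ (γ i) a b c d := by
  simp only [differentialThree, LinearMap.sum_apply, map_sum, sum_add_distrib, sum_sub_distrib]

/-- The vanishing of the third Hochschild cohomology of the product `μ`, with coefficients in the
algebra itself. -/
def ThirdCohomologyVanishes (μ : M →ₗ[K] M →ₗ[K] M) : Prop :=
  ∀ γ : M →ₗ[K] M →ₗ[K] M →ₗ[K] M, (∀ a b c d, differentialThree μ γ a b c d = 0) →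
    ∃ β, γ = differentialTwo μ β

/-- The coefficient of `hⁿ` in the associator of the product `∑ hʳ αᵣ`, called `Dₙ` in the informal
statement: the product is associative when all of these vanish. -/
def associatorCoeff (α : ℕ → M →ₗ[K] M →ₗ[K] M) (n : ℕ) : M →ₗ[K] M →ₗ[K] M →ₗ[K] M :=
  ∑ p ∈ antidiagonal n, mixedAssociator (α p.1) (α p.2)

theorem associatorCoeff_zero (α : ℕ → M →ₗ[K] M →ₗ[K] M) :
    associatorCoeff α 0 = mixedAssociator (α 0) (α 0) := by
  simp [associatorCoeff]

theorem associatorCoeff_one (α : ℕ → M →ₗ[K] M →ₗ[K] M) :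
    associatorCoeff α 1 = -differentialTwo (α 0) (α 1) := by
  simp [associatorCoeff, differentialTwo, Nat.sum_antidiagonal_succ]

theorem associatorCoeff_apply (α : ℕ → M →ₗ[K] M →ₗ[K] M) (n : ℕ) (a b c : M) :
    associatorCoeff α n a b c =
      ∑ s ∈ range (n + 1), (α (n - s) (α s a b) c - α (n - s) a (α s b c)) := by
  simp only [associatorCoeff, LinearMap.sum_apply, mixedAssociator_apply,
    Nat.sum_antidiagonal_eq_sum_range_succ_mk]

theorem associatorCoeff_congr {α α' : ℕ → M →ₗ[K] M →ₗ[K] M} {n : ℕ}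
    (h : ∀ m ≤ n, α m = α' m) : associatorCoeff α n = associatorCoeff α' n :=
  sum_congr rfl fun p hp ↦ by
    rw [h p.1 (HasAntidiagonal.antidiagonal.fst_le hp),
      h p.2 (HasAntidiagonal.antidiagonal.snd_le hp)]

theorem sum_differentialThree_associatorCoeff_eq_zero (α : ℕ → M →ₗ[K] M →ₗ[K] M) (n : ℕ)
    (a b c d : M) :
    ∑ p ∈ antidiagonal n, differentialThree (α p.1) (associatorCoeff α p.2) a b c d = 0 := by
  -- The ten terms of the pentagon cancel in pairs that differ by a permutation of `(i, j, k)`: a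
  -- rotation where the three operations are nested, a transposition where two are side by side.
  let nested (i j k : ℕ) : M :=
    α i a (α k (α j b c) d) - α i a (α k b (α j c d))
      + α i (α k (α j a b) c) d - α i (α k a (α j b c)) d
  let split (i j k : ℕ) : M := α k (α i a b) (α j c d)
  have expand (i j k : ℕ) :
      differentialThree (α i) (mixedAssociator (α j) (α k)) a b c d =
        nested i j k - nested k i j + (split i j k - split j i k) := by
    simp only [differentialThree, mixedAssociator_apply, map_sub, LinearMap.sub_apply, nested,
      split]
    abel
  simp only [associatorCoeff, differentialThree_sum, expand, sum_add_distrib, sum_sub_distrib]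
  rw [sum_antidiagonal_antidiagonal_rotate n fun j k i ↦ nested i j k,
    sum_antidiagonal_antidiagonal_swap n split, sub_self, sub_self, add_zero]

theorem differentialThree_associatorCoeff_eq_zero {α : ℕ → M →ₗ[K] M →ₗ[K] M} {n : ℕ}
    (h : ∀ m < n, associatorCoeff α m = 0) (a b c d : M) :
    differentialThree (α 0) (associatorCoeff α n) a b c d = 0 := by
  rw [← sum_differentialThree_associatorCoeff_eq_zero α n a b c d, eq_comm]
  refine sum_eq_single (0, n) (fun p hp hne ↦ ?_) (fun hn ↦ absurd (by simp) hn)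
  have hlt : p.2 < n := (HasAntidiagonal.antidiagonal.snd_le hp).lt_of_ne fun heq ↦
    hne ((HasAntidiagonal.antidiagonal_congr' hp (by simp)).2 heq)
  rw [h p.2 hlt, differentialThree_zero]

theorem associatorCoeff_update_add (α : ℕ → M →ₗ[K] M →ₗ[K] M) {n : ℕ} (hn : n ≠ 0)
    (β : M →ₗ[K] M →ₗ[K] M) :
    associatorCoeff (Function.update α n (α n + β)) n =
      associatorCoeff α n - differentialTwo (α 0) β := by
  set α' := Function.update α n (α n + β) with hα'
  have α'_zero : α' 0 = α 0 := Function.update_of_ne hn.symm ..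
  have α'_self : α' n = α n + β := Function.update_self ..
  have middle_unchanged (p : ℕ × ℕ) (hp : p ∈ antidiagonal n) (hends : p ≠ (0, n) ∧ p ≠ (n, 0)) :
      mixedAssociator (α' p.1) (α' p.2) - mixedAssociator (α p.1) (α p.2) = 0 := by
    have hfst : p.1 ≠ n := fun h ↦ hends.2 ((HasAntidiagonal.antidiagonal_congr hp (by simp)).2 h)
    have hsnd : p.2 ≠ n := fun h ↦ hends.1 ((HasAntidiagonal.antidiagonal_congr' hp (by simp)).2 h)
    rw [hα', Function.update_of_ne hfst, Function.update_of_ne hsnd, sub_self]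
  rw [sub_eq_add_neg, ← sub_eq_iff_eq_add', associatorCoeff, associatorCoeff, ← sum_sub_distrib,
    sum_eq_add (0, n) (n, 0) (by simp [hn.symm]) middle_unchanged (by simp) (by simp),
    differentialTwo, α'_zero, α'_self, mixedAssociator_add_left, mixedAssociator_add_right]
  abel

theorem exists_associatorCoeff_update_eq_zero {α : ℕ → M →ₗ[K] M →ₗ[K] M} {n : ℕ} (hn : n ≠ 0)
    (h3 : ThirdCohomologyVanishes (α 0)) (h : ∀ m < n, associatorCoeff α m = 0) :
    ∃ β, associatorCoeff (Function.update α n β) n = 0 := by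
  obtain ⟨β, hβ⟩ := h3 _ (differentialThree_associatorCoeff_eq_zero h)
  exact ⟨α n + β, by rw [associatorCoeff_update_add α hn, hβ, sub_self]⟩

theorem exists_deformation_extending {α : ℕ → M →ₗ[K] M →ₗ[K] M} {N : ℕ} (hN : N ≠ 0)
    (h3 : ThirdCohomologyVanishes (α 0)) (hα : ∀ n < N, associatorCoeff α n = 0) :
    ∃ α' : ℕ → M →ₗ[K] M →ₗ[K] M, (∀ n < N, α' n = α n) ∧ ∀ n, associatorCoeff α' n = 0 :=
  exists_seq_extending_of_exists_update (P := fun n α ↦ associatorCoeff α n = 0)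
    (fun _ _ _ heq h ↦ (associatorCoeff_congr heq).symm.trans h) hα
    fun _ α' hn heq h ↦ exists_associatorCoeff_update_eq_zero (by lia)
      (by rwa [heq 0 (Nat.pos_of_ne_zero hN)]) h

end FormalDeformation

open FormalDeformation in
theorem two_cocycle_integrates_of_H3_zero_general
    {K M : Type*} [CommSemiring K] [AddCommGroup M] [Module K M] (μ : M →ₗ[K] M →ₗ[K] M)
    (assoc : ∀ a b c : M, μ (μ a b) c = μ a (μ b c))
    (h3 : ∀ γ : M →ₗ[K] M →ₗ[K] M →ₗ[K] M,
      (∀ a₀ a₁ a₂ a₃ : M,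
        μ a₀ (γ a₁ a₂ a₃) - γ (μ a₀ a₁) a₂ a₃ + γ a₀ (μ a₁ a₂) a₃
          - γ a₀ a₁ (μ a₂ a₃) + μ (γ a₀ a₁ a₂) a₃ = 0) →
      ∃ β : M →ₗ[K] M →ₗ[K] M, ∀ a b c : M,
        γ a b c = μ a (β b c) - β (μ a b) c + β a (μ b c) - μ (β a b) c)
    (α₁ : M →ₗ[K] M →ₗ[K] M)
    (hcoc : ∀ a b c : M, μ a (α₁ b c) - α₁ (μ a b) c + α₁ a (μ b c) - μ (α₁ a b) c = 0) :
    ∃ α : ℕ → M →ₗ[K] M →ₗ[K] M,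
      α 1 = α₁ ∧ (∀ a b : M, α 0 a b = μ a b) ∧
      ∀ k, 1 ≤ k → ∀ a b c : M,
        ∑ s ∈ range (k + 1), (α (k - s) (α s a b) c - α (k - s) a (α s b c)) = 0 := by
  have hH3 : ThirdCohomologyVanishes μ := by
    simpa only [ThirdCohomologyVanishes, differentialThree, LinearMap.ext_iff,
      differentialTwo_apply] using h3
  let firstOrder : ℕ → M →ₗ[K] M →ₗ[K] M := Function.update (fun _ ↦ α₁) 0 μ
  have order_zero : associatorCoeff firstOrder 0 = 0 := by
    ext a b c
    simp [associatorCoeff_zero, firstOrder, assoc]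
  have order_one : associatorCoeff firstOrder 1 = 0 := by
    ext a b c
    simp [associatorCoeff_one, firstOrder, differentialTwo_apply, hcoc]
  obtain ⟨α, hα, hassoc⟩ := exists_deformation_extending (α := firstOrder) two_ne_zero hH3
    fun n hn ↦ by interval_cases n <;> assumption
  refine ⟨α, hα 1 one_lt_two, LinearMap.congr_fun₂ (hα 0 two_pos), fun k _ a b c ↦ ?_⟩
  simp only [← associatorCoeff_apply, hassoc, LinearMap.zero_apply]

/-- if every Hochschild 3-cocycle of `A` is a 3-coboundary
(`H³(A,A) = 0`), then every Hochschild 2-cocycle `α₁` is the infinitesimal of an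
associative formal deformation of `A`. -/
theorem two_cocycle_integrates_of_H3_zero
    {K A : Type*} [CommRing K] [Ring A] [Algebra K A]
    (h3 : ∀ γ : A →ₗ[K] A →ₗ[K] A →ₗ[K] A,
      (∀ a₀ a₁ a₂ a₃ : A,
        a₀ * γ a₁ a₂ a₃ - γ (a₀ * a₁) a₂ a₃ + γ a₀ (a₁ * a₂) a₃
          - γ a₀ a₁ (a₂ * a₃) + γ a₀ a₁ a₂ * a₃ = 0) →
      ∃ β : A →ₗ[K] A →ₗ[K] A, ∀ a b c : A,
        γ a b c = a * β b c - β (a * b) c + β a (b * c) - β a b * c)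
    (α₁ : A →ₗ[K] A →ₗ[K] A)
    (hcoc : ∀ a b c : A,
      a * α₁ b c - α₁ (a * b) c + α₁ a (b * c) - α₁ a b * c = 0) :
    ∃ α : ℕ → A →ₗ[K] A →ₗ[K] A,
      α 1 = α₁ ∧ (∀ a b : A, α 0 a b = a * b) ∧
      ∀ k, 1 ≤ k → ∀ a₁' a₂ a₃ : A,
        ∑ s ∈ Finset.range (k + 1),
          (α (k - s) (α s a₁' a₂) a₃ - α (k - s) a₁' (α s a₂ a₃)) = 0 :=
  two_cocycle_integrates_of_H3_zero_general (LinearMap.mul K A) mul_assoc h3 α₁ hcoc
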